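/- Every completely reachable DFA with n states has a reset word of length at most (7n³ + 18n² − 64n + 48)/48 if n is even, and at most (7n³ + 15n² − 55n + 33)/48 if n is odd. -/

import Mathlib

open Finset

/-- The action of a word (list of letters) on a state, applying letters left to right. -/
def act {Q A : Type*} (δ : Q → A → Q) (q : Q) (w : List A) : Q := w.foldl δ q

/-- The image of a set of states under the action of a word. -/
def img {Q A : Type*} [DecidableEq Q] (δ : Q → A → Q) (P : Finset Q) (w : List A) : Finset Q :=
  P.image (fun q => act δ q w)

/-- `excl δ w = Q \ Q·w`. -/
def excl {Q A : Type*} [Fintype Q] [DecidableEq Q] (δ : Q → A → Q) (w : List A) : Finset Q :=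
  Finset.univ \ img δ Finset.univ w

/-- `dupl δ w` : the set of states with at least two preimages under the action of `w`. -/
def dupl {Q A : Type*} [Fintype Q] [DecidableEq Q] (δ : Q → A → Q) (w : List A) : Finset Q :=
  Finset.univ.filter (fun p => ∃ q₁ q₂ : Q, q₁ ≠ q₂ ∧ act δ q₁ w = p ∧ act δ q₂ w = p)

/-- A DFA is completely reachable if every nonempty subset of states is the image of the
full state set under the action of some word. -/
def CompletelyReachable {Q A : Type*} [Fintype Q] [DecidableEq Q] (δ : Q → A → Q) : Prop :=
  ∀ P : Finset Q, P.Nonempty → ∃ w : List A, img δ Finset.univ w = P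

/-!
A subset of size `n - 1` is the image of a word of length at most `n`: along a shortest such word
the images are pairwise distinct subsets with at least `n - 1` elements, and there are only `n + 1`
of those. So every state `q` is avoided by a word of length at most `n`. If `w` misses fewer than
half of the states, some state `p` has exactly one preimage `q` under `w`, and prepending a word
avoiding `q` makes `p` missed as well. Starting from a non-surjective letter, `1 + n * t` letters
therefore suffice to miss more than `t` states as long as `2 * t < n`.

From there on the image `S` is compressed greedily by the method of Frankl and Pin. A shortest word
shrinking `S` carries a pair of states through the images of `S`; the pairs and the complements of
the images form a skew family, so the word has length at most `(n - #S + 2).choose 2`. Summing these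
bounds and taking `t = (n - 1) / 2` gives the estimate.
-/

section SkewPairs

open Polynomial

theorem card_le_card_of_isUpperTriangular_mul {ι κ K : Type*} [Fintype ι] [LinearOrder ι]
    [Fintype κ] [Field K] {E : Matrix ι κ K} {U : Matrix κ ι K}
    (htri : (E * U).IsUpperTriangular) (hdiag : ∀ i, (E * U) i i ≠ 0) :
    Fintype.card ι ≤ Fintype.card κ := by
  have hdet : IsUnit (E * U) := by
    rw [Matrix.isUnit_iff_isUnit_det, Matrix.det_of_isUpperTriangular htri, isUnit_iff_ne_zero]
    exact prod_ne_zero_iff.2 fun i _ => hdiag i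
  calc Fintype.card ι = (E * U).rank := (Matrix.rank_of_isUnit _ hdet).symm
    _ ≤ E.rank := Matrix.rank_mul_le_left E U
    _ ≤ Fintype.card κ := Matrix.rank_le_card_width E

/-- The unordered tuple underlying an ordered one. It indexes the monomials in the coefficients of
a polynomial `p` that occur in a product of values of `p`. -/
def symOfFn {β : Type*} {r : ℕ} (a : Fin r → β) : Sym β r :=
  Sym.mk (univ.val.map a) (by simp)

theorem prod_eval_eq_sum_sym {R : Type*} [CommSemiring R] {p : R[X]} {d r : ℕ}
    (hp : p.natDegree < d) (x : Fin r → R) :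
    ∏ k, p.eval (x k) = ∑ m : Sym (Fin d) r,
      (∑ a with symOfFn a = m, ∏ k, x k ^ (a k : ℕ)) *
        ((m : Multiset (Fin d)).map fun j : Fin d => p.coeff j).prod := by
  calc ∏ k, p.eval (x k)
      = ∏ k, ∑ j : Fin d, p.coeff j * x k ^ (j : ℕ) := by
        simp only [eval_eq_sum_range' hp, Finset.sum_range]
    _ = ∑ a : Fin r → Fin d, (∏ k, x k ^ (a k : ℕ)) * ∏ k, p.coeff (a k) := by
        simp only [prod_univ_sum, Fintype.piFinset_univ, prod_mul_distrib, mul_comm]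
    _ = _ := by
        rw [← sum_fiberwise univ symOfFn]
        refine sum_congr rfl fun m _ => ?_
        rw [sum_mul]
        refine sum_congr rfl fun a ha => ?_
        obtain rfl := (mem_filter.1 ha).2
        simp only [symOfFn, Sym.coe_mk, Multiset.map_map, Finset.prod, Function.comp_def]

theorem exists_field_injective.{u} (α : Type u) :
    ∃ (K : Type u) (_ : Field K) (φ : α → K), Function.Injective φ :=
  ⟨FractionRing (MvPolynomial α ℚ), inferInstance, _,
    (IsFractionRing.injective (MvPolynomial α ℚ) _).comp MvPolynomial.X_injective⟩

/-- Frankl's skew version of Bollobás' theorem on set pairs. -/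
theorem card_le_choose_of_skew {ι α : Type*} [Fintype ι] [LinearOrder ι] {r s : ℕ}
    (x : ι → Fin r → α) (B : ι → Finset α) (hB : ∀ i, #(B i) ≤ s)
    (hdisj : ∀ i k, x i k ∉ B i) (hskew : ∀ i j, j < i → ∃ k, x i k ∈ B j) :
    Fintype.card ι ≤ (s + r).choose r := by
  classical
  obtain ⟨K, _, φ, hφ⟩ := exists_field_injective α
  let p (j : ι) : K[X] := ∏ b ∈ B j, (X - C (φ b))
  have hdeg (j : ι) : (p j).natDegree < s + 1 := by
    rw [natDegree_finsetProd_X_sub_C_eq_card]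
    exact Nat.lt_succ_of_le (hB j)
  have hroot (j : ι) (q : α) : (p j).eval (φ q) = 0 ↔ q ∈ B j := by
    simp [p, eval_prod, prod_eq_zero_iff, sub_eq_zero, hφ.eq_iff]
  let E : Matrix ι (Sym (Fin (s + 1)) r) K :=
    .of fun i m => ∑ a with symOfFn a = m, ∏ k, φ (x i k) ^ (a k : ℕ)
  let U : Matrix (Sym (Fin (s + 1)) r) ι K :=
    .of fun m j => ((m : Multiset (Fin (s + 1))).map fun c : Fin (s + 1) => (p j).coeff c).prod
  have hEU (i j : ι) : (E * U) i j = ∏ k, (p j).eval (φ (x i k)) := by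
    rw [prod_eval_eq_sum_sym (hdeg j)]
    rfl
  have hcard : Fintype.card ι ≤ Fintype.card (Sym (Fin (s + 1)) r) := by
    refine card_le_card_of_isUpperTriangular_mul (E := E) (U := U) (fun i j hji => ?_) fun i => ?_
    · obtain ⟨k, hk⟩ := hskew i j hji
      rw [hEU]
      exact prod_eq_zero (mem_univ k) ((hroot j _).2 hk)
    · rw [hEU]
      exact prod_ne_zero_iff.2 fun k _ => mt (hroot i _).1 (hdisj i k)
  rwa [Sym.card_sym_eq_choose, Fintype.card_fin, Nat.add_right_comm, Nat.add_sub_cancel] at hcard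

end SkewPairs

section Automaton

variable {Q A : Type*} {δ : Q → A → Q}

theorem length_take_append_drop_lt {v : List A} {i j : ℕ} (hij : i < j) (hj : j ≤ v.length) :
    (v.take i ++ v.drop j).length < v.length := by
  rw [List.length_append, List.length_take, List.length_drop]
  omega

theorem act_append (q : Q) (u v : List A) : act δ q (u ++ v) = act δ (act δ q u) v :=
  List.foldl_append

variable [DecidableEq Q] {S T : Finset Q} {u v w : List A} {p q : Q}

theorem mem_img : p ∈ img δ S w ↔ ∃ q ∈ S, act δ q w = p :=
  mem_image

theorem act_mem_img (hq : q ∈ S) : act δ q w ∈ img δ S w :=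
  mem_image_of_mem _ hq

@[simp]
theorem img_nil : img δ S [] = S :=
  image_id'

theorem img_append : img δ S (u ++ v) = img δ (img δ S u) v := by
  simp only [img, image_image, Function.comp_def, act_append]

theorem img_nonempty (hS : S.Nonempty) : (img δ S w).Nonempty :=
  hS.image _

theorem card_img_le : #(img δ S w) ≤ #S :=
  card_image_le

theorem card_img_mono (h : S ⊆ T) : #(img δ S w) ≤ #(img δ T w) :=
  card_le_card (image_subset_image h)

theorem card_img_lt (hp : p ∈ S) (hq : q ∈ S) (hpq : p ≠ q) (h : act δ p w = act δ q w) :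
    #(img δ S w) < #S :=
  card_img_le.lt_of_ne fun hcard => hpq (card_image_iff.1 hcard hp hq h)

theorem card_img_append_lt (hp : p ∈ img δ S u) (hq : q ∈ img δ S u) (hpq : p ≠ q)
    (h : act δ p v = act δ q v) : #(img δ S (u ++ v)) < #S := by
  rw [img_append]
  exact (card_img_lt hp hq hpq h).trans_le card_img_le

variable [Fintype Q]

theorem mem_excl : q ∈ excl δ w ↔ ∀ s, act δ s w ≠ q := by
  simp [excl, img]

theorem card_excl_add_card_img : #(excl δ w) + #(img δ univ w) = Fintype.card Q := by
  rw [excl, ← compl_eq_univ_sdiff, card_compl_add_card]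

theorem exists_img_eq_length_lt (h : img δ S w = T) :
    ∃ v : List A, img δ S v = T ∧ v.length < #{R : Finset Q | #T ≤ #R} := by
  obtain ⟨v, hv⟩ :=
    exists_minimalFor_of_wellFoundedLT (fun v => img δ S v = T) List.length ⟨w, h⟩
  have hsplit (i : ℕ) : img δ (img δ S (v.take i)) (v.drop i) = T := by
    rw [← img_append, List.take_append_drop, hv.prop]
  have hinj : Function.Injective fun i : Fin (v.length + 1) => img δ S (v.take i) := by
    refine Function.Injective.of_lt_imp_ne fun i j hij heq => ?_
    refine hv.not_prop_of_lt (length_take_append_drop_lt hij (Fin.is_le j)) ?_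
    rw [img_append, show img δ S (v.take i) = img δ S (v.take j) from heq, hsplit]
  refine ⟨v, hv.prop, ?_⟩
  calc v.length < #(univ : Finset (Fin (v.length + 1))) := by simp
    _ ≤ #{R : Finset Q | #T ≤ #R} := card_le_card_of_injOn _ (fun i _ => by
        simpa using (hsplit i).symm ▸ card_img_le (δ := δ)) hinj.injOn

theorem card_filter_card_erase_le (q : Q) :
    #{R : Finset Q | #(univ.erase q) ≤ #R} ≤ Fintype.card Q + 1 := by
  have hsub : ({R : Finset Q | #(univ.erase q) ≤ #R} : Finset (Finset Q)) ⊆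
      insert univ (univ.image univ.erase) := by
    intro R hR
    by_cases hRu : R = univ
    · exact mem_insert.2 (.inl hRu)
    obtain ⟨p, hp⟩ : ∃ p, p ∉ R := by simpa [eq_univ_iff_forall] using hRu
    have hle : #(univ.erase p) ≤ #R := by simpa [card_erase_of_mem] using hR
    have hRp : R = univ.erase p :=
      eq_of_subset_of_card_le (subset_erase.2 ⟨subset_univ R, hp⟩) hle
    exact mem_insert_of_mem (mem_image.2 ⟨p, mem_univ p, hRp.symm⟩)
  calc _ ≤ #(insert univ (univ.image univ.erase)) := card_le_card hsub
    _ ≤ #(univ.image (univ : Finset Q).erase) + 1 := card_insert_le _ _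
    _ ≤ Fintype.card Q + 1 := Nat.succ_le_succ card_image_le

theorem exists_mem_excl_length_le (h : img δ univ w = univ.erase q) :
    ∃ v : List A, v.length ≤ Fintype.card Q ∧ q ∈ excl δ v := by
  obtain ⟨v, hv, hlen⟩ := exists_img_eq_length_lt h
  exact ⟨v, Nat.lt_succ_iff.1 (hlen.trans_le (card_filter_card_erase_le q)), by simp [excl, hv]⟩

theorem exists_letter_excl_nonempty (h : (excl δ w).Nonempty) :
    ∃ a : A, (excl δ [a]).Nonempty := by
  by_contra! hsurj
  have hletter (a : A) : img δ univ [a] = univ := by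
    simpa [excl] using hsurj a
  have hword : img δ univ w = univ := by
    clear h
    induction w with
    | nil => exact img_nil
    | cons a w ih => rw [← List.singleton_append, img_append, hletter, ih]
  simp [excl, hword] at h

theorem exists_existsUnique_act_eq (h : 2 * #(excl δ w) < Fintype.card Q) :
    ∃ p, ∃! q, act δ q w = p := by
  have hcard : #(univ : Finset Q) < #(img δ univ w) * 2 := by
    have := card_excl_add_card_img (δ := δ) (w := w)
    rw [card_univ]
    omega
  obtain ⟨p, hp, hfib⟩ :=
    exists_card_fiber_lt_of_card_lt_mul (f := fun q => act δ q w) hcard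
  obtain ⟨q, -, hq⟩ := mem_img.1 hp
  refine ⟨p, q, hq, fun s hs => ?_⟩
  exact card_le_one.1 (Nat.lt_succ_iff.1 hfib) s (by simpa using hs) q (by simpa using hq)

theorem card_excl_lt_card_excl_append (hp : ∃! q, act δ q w = p) (hq : act δ q w = p)
    (hu : q ∈ excl δ u) : #(excl δ w) < #(excl δ (u ++ w)) := by
  refine card_lt_card (ssubset_iff_exists_subset_erase.2 ⟨p, ?_, fun r hr => ?_⟩)
  · refine mem_excl.2 fun s hs => ?_
    rw [act_append] at hs
    exact mem_excl.1 hu s (hp.unique hs hq)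
  · have hr := mem_excl.1 hr
    refine mem_erase.2 ⟨fun hrp => hr q (hq.trans hrp.symm), mem_excl.2 fun s => ?_⟩
    rw [act_append]
    exact hr _

theorem exists_lt_card_excl {ℓ t : ℕ} (hw : (excl δ w).Nonempty)
    (havoid : ∀ q, ∃ u : List A, u.length ≤ ℓ ∧ q ∈ excl δ u) (ht : 2 * t < Fintype.card Q) :
    ∃ v : List A, v.length ≤ w.length + ℓ * t ∧ t < #(excl δ v) := by
  induction t with
  | zero => exact ⟨w, by simp, card_pos.2 hw⟩
  | succ t ih =>
    obtain ⟨v, hlen, hv⟩ := ih (by omega)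
    rcases lt_or_ge (t + 1) #(excl δ v) with hlt | hge
    · exact ⟨v, hlen.trans (by gcongr; omega), hlt⟩
    obtain ⟨p, hp⟩ := exists_existsUnique_act_eq (δ := δ) (w := v) (by omega)
    obtain ⟨q, hq⟩ := hp.exists
    obtain ⟨u, hu, hqu⟩ := havoid q
    refine ⟨u ++ v, ?_, Nat.lt_of_le_of_lt hv (card_excl_lt_card_excl_append hp hq hqu)⟩
    rw [List.length_append, Nat.mul_succ]
    omega

theorem exists_card_img_lt_length_le (h : #(img δ S w) < #S) :
    ∃ v : List A, #(img δ S v) < #S ∧ v.length ≤ (Fintype.card Q - #S + 2).choose 2 := by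
  obtain ⟨v, hv⟩ :=
    exists_minimalFor_of_wellFoundedLT (fun v => #(img δ S v) < #S) List.length ⟨w, h⟩
  have hinj (i : Fin v.length) : Set.InjOn (fun s => act δ s (v.take i)) S :=
    card_image_iff.1 (card_img_le.antisymm (not_lt.1 (hv.not_prop_of_lt (by simp))))
  obtain ⟨x, hx, y, hy, hxy, hmerge⟩ := exists_ne_map_eq_of_card_image_lt hv.prop
  refine ⟨v, hv.prop, ?_⟩
  let pair (i : Fin v.length) : Fin 2 → Q := ![act δ x (v.take i), act δ y (v.take i)]
  suffices hskew : ∀ i j : Fin v.length, j < i → ∃ k, pair i k ∈ (img δ S (v.take j))ᶜ by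
    rw [← Fintype.card_fin v.length]
    refine card_le_choose_of_skew pair (fun i => (img δ S (v.take i))ᶜ) (fun i => ?_) ?_ hskew
    · rw [card_compl, img, card_image_of_injOn (hinj i)]
    · simp [pair, Fin.forall_fin_two, act_mem_img, hx, hy]
  intro i j hji
  by_contra! hmem
  simp only [pair, notMem_compl, Fin.forall_fin_two, Matrix.cons_val_zero,
    Matrix.cons_val_one] at hmem
  have hne : act δ x (v.take i) ≠ act δ y (v.take i) := (hinj i).ne hx hy hxy
  have hmerge_drop : act δ (act δ x (v.take i)) (v.drop i) =
      act δ (act δ y (v.take i)) (v.drop i) := by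
    simpa only [← act_append, List.take_append_drop] using hmerge
  exact hv.not_prop_of_lt (length_take_append_drop_lt hji i.is_lt.le)
    (card_img_append_lt hmem.1 hmem.2 hne hmerge_drop)

theorem exists_card_img_eq_one_length_add_le (hsync : ∃ w, #(img δ univ w) = 1)
    (hS : S.Nonempty) :
    ∃ w : List A, #(img δ S w) = 1 ∧
      w.length + (Fintype.card Q - #S + 2).choose 3 ≤ (Fintype.card Q + 1).choose 3 := by
  induction hk : #S using Nat.strong_induction_on generalizing S with
  | _ k ih =>
  subst hk
  have hpos : 1 ≤ #S := hS.card_pos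
  have hle : #S ≤ Fintype.card Q := card_le_univ S
  rcases hpos.eq_or_lt with hone | hlt
  · refine ⟨[], by rw [img_nil, hone], ?_⟩
    rw [List.length_nil, Nat.zero_add]
    exact Nat.choose_le_choose 3 (by omega)
  obtain ⟨r, hr⟩ := hsync
  obtain ⟨u, hu, hulen⟩ := exists_card_img_lt_length_le (δ := δ) (w := r)
    ((card_img_mono (subset_univ S)).trans_lt (hr ▸ hlt))
  obtain ⟨w, hw, hwlen⟩ := ih _ hu (img_nonempty hS) rfl
  refine ⟨u ++ w, by rw [img_append, hw], ?_⟩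
  calc (u ++ w).length + (Fintype.card Q - #S + 2).choose 3
      = w.length + (u.length + (Fintype.card Q - #S + 2).choose 3) := by
        rw [List.length_append]
        ring
    _ ≤ w.length + (Fintype.card Q - #S + 3).choose 3 := by
        rw [Nat.choose_succ_succ' (Fintype.card Q - #S + 2) 2]
        gcongr
    _ ≤ w.length + (Fintype.card Q - #(img δ S u) + 2).choose 3 := by
        gcongr 1
        exact Nat.choose_le_choose 3 (by omega)
    _ ≤ (Fintype.card Q + 1).choose 3 := hwlen

theorem exists_reset_word_of_avoiding {ℓ t : ℕ} (hsync : ∃ w, #(img δ univ w) = 1)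
    (havoid : ∀ q, ∃ u : List A, u.length ≤ ℓ ∧ q ∈ excl δ u) (ht : 2 * t < Fintype.card Q) :
    ∃ w : List A, #(img δ univ w) = 1 ∧
      w.length + (t + 3).choose 3 ≤ 1 + ℓ * t + (Fintype.card Q + 1).choose 3 := by
  have : Nonempty Q := Fintype.card_pos_iff.1 (by omega)
  obtain ⟨u, -, hu⟩ := havoid (Classical.arbitrary Q)
  obtain ⟨a, ha⟩ := exists_letter_excl_nonempty ⟨_, hu⟩
  obtain ⟨v, hvlen, hv⟩ := exists_lt_card_excl ha havoid ht
  obtain ⟨w, hw, hwlen⟩ :=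
    exists_card_img_eq_one_length_add_le (S := img δ univ v) hsync (img_nonempty univ_nonempty)
  refine ⟨v ++ w, by rw [img_append, hw], ?_⟩
  have hcard := card_excl_add_card_img (δ := δ) (w := v)
  have hchoose : (t + 3).choose 3 ≤ (Fintype.card Q - #(img δ univ v) + 2).choose 3 :=
    Nat.choose_le_choose 3 (by omega)
  rw [List.length_singleton] at hvlen
  rw [List.length_append]
  omega

theorem exists_reset_word_of_forall_erase {t : ℕ} (hsync : ∃ w, #(img δ univ w) = 1)
    (hreach : ∀ q : Q, (univ.erase q).Nonempty → ∃ w : List A, img δ univ w = univ.erase q)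
    (ht : 2 * t < Fintype.card Q) :
    ∃ w : List A, #(img δ univ w) = 1 ∧
      w.length + (t + 3).choose 3 ≤ 1 + Fintype.card Q * t + (Fintype.card Q + 1).choose 3 := by
  rcases Nat.lt_or_ge 1 (Fintype.card Q) with hone | hone
  · have : Nontrivial Q := Fintype.one_lt_card_iff_nontrivial.1 hone
    refine exists_reset_word_of_avoiding hsync (fun q => ?_) ht
    obtain ⟨w, hw⟩ := hreach q (univ_nontrivial.erase_nonempty)
    exact exists_mem_excl_length_le hw
  · obtain rfl : t = 0 := by omega
    refine ⟨[], by rw [img_nil, card_univ]; omega, ?_⟩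
    simp

end Automaton

section Bounds

theorem six_mul_choose_three (m : ℕ) : 6 * (m + 2).choose 3 = (m + 2) * (m + 1) * m := by
  simpa [Nat.descFactorial, Nat.factorial, mul_comm, mul_assoc, mul_left_comm] using
    (Nat.descFactorial_eq_factorial_mul_choose (m + 2) 3).symm

theorem length_bound_of_even {L t : ℕ}
    (h : L + (t + 3).choose 3 ≤ 1 + (2 * t + 2) * t + (2 * t + 3).choose 3) :
    (48 : ℤ) * L ≤ 7 * (2 * t + 2) ^ 3 + 18 * (2 * t + 2) ^ 2 - 64 * (2 * t + 2) + 48 := by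
  have h₁ := six_mul_choose_three (t + 1)
  have h₂ := six_mul_choose_three (2 * t + 1)
  zify at h h₁ h₂
  linarith

theorem length_bound_of_odd {L t : ℕ}
    (h : L + (t + 3).choose 3 ≤ 1 + (2 * t + 1) * t + (2 * t + 2).choose 3) :
    (48 : ℤ) * L ≤ 7 * (2 * t + 1) ^ 3 + 15 * (2 * t + 1) ^ 2 - 55 * (2 * t + 1) + 33 := by
  have h₁ := six_mul_choose_three (t + 1)
  have h₂ := six_mul_choose_three (2 * t)
  zify at h h₁ h₂
  linarith

end Bounds

theorem completelyReachable_reset_bound_general {Q A : Type*} [Fintype Q] [DecidableEq Q]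
    (δ : Q → A → Q) (hsync : ∃ w, #(img δ univ w) = 1)
    (hreach : ∀ q : Q, (univ.erase q).Nonempty → ∃ w : List A, img δ univ w = univ.erase q)
    (n : ℕ) (hn : n = Fintype.card Q) :
    ∃ w : List A, #(img δ univ w) = 1 ∧
      (Even n → (48 : ℤ) * w.length ≤ 7 * (n : ℤ) ^ 3 + 18 * (n : ℤ) ^ 2 - 64 * n + 48) ∧
      (Odd n → (48 : ℤ) * w.length ≤ 7 * (n : ℤ) ^ 3 + 15 * (n : ℤ) ^ 2 - 55 * n + 33) := by
  have hpos : 0 < Fintype.card Q := by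
    obtain ⟨w, hw⟩ := hsync
    exact (hw ▸ one_pos : 0 < #(img δ univ w)).trans_le (card_le_univ _)
  obtain ⟨w, hw, hlen⟩ :=
    exists_reset_word_of_forall_erase (t := (n - 1) / 2) hsync hreach (by omega)
  refine ⟨w, hw, fun heven => ?_, fun hodd => ?_⟩
  · obtain ⟨t, rfl⟩ : ∃ t, n = 2 * t + 2 := ⟨n / 2 - 1, by grind⟩
    rw [← hn, show (2 * t + 2 - 1) / 2 = t by omega] at hlen
    exact_mod_cast length_bound_of_even hlen
  · obtain ⟨t, rfl⟩ := hodd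
    rw [← hn, show (2 * t + 1 - 1) / 2 = t by omega] at hlen
    exact_mod_cast length_bound_of_odd hlen

/-- Every completely reachable DFA with n states has a reset word of length at most
(7n³ + 18n² − 64n + 48)/48 if n is even and (7n³ + 15n² − 55n + 33)/48 if n is odd. -/
theorem completelyReachable_reset_bound {Q A : Type*} [Fintype Q] [DecidableEq Q]
    [Nonempty Q] [Fintype A] (δ : Q → A → Q) (h : CompletelyReachable δ) (n : ℕ)
    (hn : n = Fintype.card Q) :
    ∃ w : List A, (img δ Finset.univ w).card = 1 ∧
      (Even n → (48 : ℤ) * w.length ≤ 7 * (n : ℤ) ^ 3 + 18 * (n : ℤ) ^ 2 - 64 * n + 48) ∧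
      (Odd n → (48 : ℤ) * w.length ≤ 7 * (n : ℤ) ^ 3 + 15 * (n : ℤ) ^ 2 - 55 * n + 33) := by
  obtain ⟨w, hw⟩ := h {Classical.arbitrary Q} (singleton_nonempty _)
  exact completelyReachable_reset_bound_general δ ⟨w, by simp [hw]⟩ (fun q => h (univ.erase q)) n hn
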